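/- For every integer m with m not congruent to 0 mod n and m not congruent to -1 mod n, the rational characteristic sequence satisfies the palindrome property k_{n-1-m} = k_m. -/

import Mathlib

/-- The rational characteristic sequence with respect to `(n, l)`:
`k_m = ⌊(m+1)l/n⌋ - ⌊ml/n⌋` for `m ∈ ℤ`. -/
def charSeq (n l : ℕ) (m : ℤ) : ℤ :=
  Int.fdiv ((m + 1) * l) n - Int.fdiv (m * l) n

/-!
The sequence has period `n`, so the palindrome property is the symmetry `k_{-1-m} = k_m`. The
reflection `m ↦ -1 - m` negates and swaps the two numerators `ml` and `(m+1)l`. Since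
`⌊-x⌋ = -⌊x⌋ - 1` when `x` is not an integer and `⌊-x⌋ = -⌊x⌋` when it is, the difference of floors
is preserved exactly when `ml/n` and `(m+1)l/n` are both integers or both non-integers.
-/

theorem charSeq_periodic {n : ℕ} (hn : n ≠ 0) (l : ℕ) : Function.Periodic (charSeq n l) n := by
  have hn' : (n : ℤ) ≠ 0 := mod_cast hn
  have fdiv_shift (a : ℤ) : ((a + n) * l).fdiv n = (a * l).fdiv n + l := by
    rw [add_mul, Int.add_mul_fdiv_left _ _ hn']
  intro m
  simp only [charSeq, add_right_comm m (n : ℤ) 1, fdiv_shift, add_sub_add_right_eq_sub]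

theorem charSeq_neg_one_sub_eq_iff {n : ℕ} (hn : n ≠ 0) (l : ℕ) (m : ℤ) :
    charSeq n l (-1 - m) = charSeq n l m ↔ ((n : ℤ) ∣ m * l ↔ (n : ℤ) ∣ (m + 1) * l) := by
  have hn' : (n : ℤ) ≠ 0 := mod_cast hn
  have upper_numerator : (-1 - m + 1) * l = -(m * l) := by ring
  have lower_numerator : (-1 - m) * l = -((m + 1) * l) := by ring
  simp only [charSeq, upper_numerator, lower_numerator, Int.neg_fdiv, hn', false_or]
  split_ifs <;> grind

theorem charSeq_palindrome_general {n : ℕ} (hn : n ≠ 0) (l : ℕ) (m : ℤ) :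
    charSeq n l ((n : ℤ) - 1 - m) = charSeq n l m ↔
      ((n : ℤ) ∣ m * l ↔ (n : ℤ) ∣ (m + 1) * l) := by
  rw [show (n : ℤ) - 1 - m = -1 - m + n by ring, charSeq_periodic hn l,
    charSeq_neg_one_sub_eq_iff hn]

/-- Palindrome property: `k_{n-1-m} = k_m` for `m` not ≡ `0` or `-1` mod `n`. -/
theorem charSeq_palindrome (n l : ℕ) (hn : 2 ≤ n) (hl : l < n)
    (hgcd : Nat.gcd n l = 1) (m : ℤ)
    (h0 : ¬ (n : ℤ) ∣ m) (h1 : ¬ (n : ℤ) ∣ (m + 1)) :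
    charSeq n l ((n : ℤ) - 1 - m) = charSeq n l m := by
  have hcop : IsCoprime (n : ℤ) l := Nat.isCoprime_iff_coprime.mpr hgcd
  exact (charSeq_palindrome_general (by omega) l m).mpr
    (iff_of_false (mt hcop.dvd_of_dvd_mul_right h0) (mt hcop.dvd_of_dvd_mul_right h1))
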